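/- arXiv:2504.15410 — 3 statements merged into one kernel-verified Lean document; each statement's English description precedes it below -/
import Mathlib

section
/- Let n ≥ 1 be a natural number, p ∈ [0,1] a real number, and k a natural number with k ≤ n·p. Then Σ_{j=0}^{k} (n choose j) · pʲ · (1−p)^{n−j} ≤ exp(−2n(p − k/n)²). -/
/-! A Bernoulli variable takes values in an interval of length `1`, so by Hoeffding's lemma it is
sub-Gaussian with parameter `1 / 4` once centred. The moment generating function of `Bin(n, p)` is
the `n`-th power of that of a Bernoulli variable, so the centred binomial is sub-Gaussian with
parameter `n / 4`, and the Chernoff bound for its negative is the lower tail estimate. -/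

section Binomial

open MeasureTheory ProbabilityTheory Real
open scoped NNReal unitInterval

theorem ae_bernoulliMeasure_eq_or_eq {X : Type*} [MeasurableSpace X] [MeasurableSingletonClass X]
    (x y : X) (p : I) : ∀ᵐ z ∂Ber(x, y, p), z = x ∨ z = y := by
  rw [bernoulliMeasure_def, ae_add_measure_iff]
  exact ⟨Measure.ae_smul_measure (by simp [ae_dirac_eq]) _,
    Measure.ae_smul_measure (by simp [ae_dirac_eq]) _⟩

theorem hasSubgaussianMGF_bernoulliMeasure (x y : ℝ) (p : I) :
    HasSubgaussianMGF (fun z ↦ z - (p * x + (1 - p) * y)) ((‖x - y‖₊ / 2) ^ 2) Ber(x, y, p) := by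
  have mean : ∫ z, z ∂Ber(x, y, p) = p * x + (1 - p) * y := by simp [integral_bernoulliMeasure]
  have width : ‖max x y - min x y‖₊ = ‖x - y‖₊ := by
    ext
    simp [max_sub_min_eq_abs, abs_sub_comm]
  have bounded : ∀ᵐ z ∂Ber(x, y, p), z ∈ Set.Icc (min x y) (max x y) := by
    filter_upwards [ae_bernoulliMeasure_eq_or_eq x y p] with z hz
    rcases hz with rfl | rfl <;> simp
  simpa only [mean, width] using hasSubgaussianMGF_of_mem_Icc aemeasurable_id' bounded

theorem mgf_binomial (n : ℕ) (p : I) (t : ℝ) :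
    mgf (fun k : ℕ ↦ (k : ℝ)) Bin(n, p) t = mgf (fun x ↦ x) Ber((1 : ℝ), 0, p) t ^ n := by
  calc mgf (fun k : ℕ ↦ (k : ℝ)) Bin(n, p) t
      = ∑ k ∈ Finset.range (n + 1), n.choose k * (p : ℝ) ^ k * (1 - p) ^ (n - k) * exp (t * k) := by
        rw [mgf, integral_binomial, ← Nat.range_succ_eq_Iic]
        simp only [smul_eq_mul]
    _ = (p * exp t + (1 - p)) ^ n := by
        rw [add_pow]
        refine Finset.sum_congr rfl fun k _ ↦ ?_
        rw [mul_pow, mul_comm t, exp_nat_mul]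
        ring
    _ = mgf (fun x ↦ x) Ber((1 : ℝ), 0, p) t ^ n := by simp [mgf, integral_bernoulliMeasure]

theorem hasSubgaussianMGF_binomial (n : ℕ) (p : I) :
    HasSubgaussianMGF (fun k : ℕ ↦ (k : ℝ) - n * p) (n / 4) Bin(n, p) where
  integrable_exp_mul _ := integrable_binomial _
  mgf_le t := by
    have bernoulli : mgf (fun x ↦ x - (p : ℝ)) Ber((1 : ℝ), 0, p) t ≤ exp (t ^ 2 / 8) := by
      convert (hasSubgaussianMGF_bernoulliMeasure 1 0 p).mgf_le t using 2
      · simp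
      · simp only [sub_zero, nnnorm_one, one_div, inv_pow, NNReal.coe_inv, NNReal.coe_pow,
          NNReal.coe_ofNat]
        ring
    calc mgf (fun k : ℕ ↦ (k : ℝ) - n * p) Bin(n, p) t
        = mgf (fun x ↦ x - (p : ℝ)) Ber((1 : ℝ), 0, p) t ^ n := by
          simp only [sub_eq_add_neg, mgf_add_const, mgf_binomial, mul_pow, ← exp_nat_mul]
          ring_nf
      _ ≤ exp (t ^ 2 / 8) ^ n := pow_le_pow_left₀ mgf_nonneg bernoulli n
      _ = exp ((n / 4 : ℝ≥0) * t ^ 2 / 2) := by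
          rw [← exp_nat_mul]
          push_cast
          ring_nf

theorem binomial_real_le_mul_sub_le (n : ℕ) (p : I) {ε : ℝ} (hε : 0 ≤ ε) :
    Bin(n, p).real {k | (k : ℝ) ≤ n * (p - ε)} ≤ exp (-2 * n * ε ^ 2) := by
  have chernoff := (hasSubgaussianMGF_binomial n p).neg.measure_ge_le (ε := n * ε) (by positivity)
  convert chernoff using 2
  · ext k
    simp only [Set.mem_ofPred_eq, Pi.neg_apply]
    constructor <;> intro h <;> linarith
  · rcases n.eq_zero_or_pos with rfl | hn
    · simp
    · push_cast
      field_simp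
      ring

theorem binomial_real_Iic (n k : ℕ) (p : I) :
    Bin(n, p).real (Set.Iic k) =
      ∑ j ∈ Finset.range (k + 1), (n.choose j : ℝ) * p ^ j * (1 - p) ^ (n - j) := by
  rw [← Finset.coe_Iic, ← sum_measureReal_singleton, Nat.range_succ_eq_Iic]
  simp only [binomial_real_singleton]

end Binomial

/-- Hoeffding's inequality for the lower tail of a binomial distribution:
if `X ∼ Binomial(n, p)` then `Pr(X ≤ k) ≤ exp(−2n(p − k/n)²)` for `k ≤ np`. -/
theorem stmt_4 (n : ℕ) (hn : 1 ≤ n) (p : ℝ) (hp : p ∈ Set.Icc (0 : ℝ) 1)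
    (k : ℕ) (hk : (k : ℝ) ≤ (n : ℝ) * p) :
    ∑ j ∈ Finset.range (k + 1), (n.choose j : ℝ) * p ^ j * (1 - p) ^ (n - j) ≤
      Real.exp (-2 * (n : ℝ) * (p - (k : ℝ) / (n : ℝ)) ^ 2) := by
  have n_pos : (0 : ℝ) < n := by exact_mod_cast hn
  have deviation_nonneg : 0 ≤ p - k / n := sub_nonneg.2 ((div_le_iff₀' n_pos).2 hk)
  have threshold : (n : ℝ) * (p - (p - k / n)) = k := by field_simp; ring
  have tail := binomial_real_le_mul_sub_le n ⟨p, hp⟩ deviation_nonneg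
  simp only [threshold, Nat.cast_le] at tail
  exact (binomial_real_Iic n k ⟨p, hp⟩).symm.trans_le tail
end

section
/- Let E = EuclideanSpace ℝ (Fin d), let μ > 0, and let f : E → ℝ be differentiable and μ-strongly convex on E (i.e., x ↦ f(x) − (μ/2)‖x‖² is convex). Suppose f attains a global minimum value f* at some point x* ∈ E (so f* ≤ f(x) for all x). Then for every x ∈ E, 2μ·(f(x) − f*) ≤ ‖∇f(x)‖², where ∇f denotes the gradient of f. -/
/-!
Uniform convexity bounds `f` along the segment from `x` to `y` by a quadratic polynomial in the
parameter `t` whose value at `t = 0` is `f x`; comparing derivatives there puts `f y` above the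
tangent at `x` by at least `φ ‖x - y‖`. For `φ r = μ / 2 * r ^ 2` and `r = ‖x - y‖`, this gives
`2 * μ * (f x - f y) ≤ 2 * (μ * r) * ‖f'‖ - (μ * r) ^ 2`, whose maximum over `μ * r` is `‖f'‖ ^ 2`.
-/

lemma norm_gradient_eq_norm_fderiv {𝕜 F : Type*} [RCLike 𝕜] [NormedAddCommGroup F]
    [InnerProductSpace 𝕜 F] [CompleteSpace F] (f : F → 𝕜) (x : F) :
    ‖gradient f x‖ = ‖fderiv 𝕜 f x‖ :=
  (InnerProductSpace.toDual 𝕜 F).symm.norm_map _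

section NormedSpace

variable {E : Type*} [NormedAddCommGroup E] [NormedSpace ℝ E] {s : Set E} {f : E → ℝ}
  {f' : E →L[ℝ] ℝ} {x y : E}

lemma tangent_add_modulus_le_of_uniformConvexOn {φ : ℝ → ℝ} (hf : UniformConvexOn s φ f)
    (hf' : HasFDerivWithinAt f f' s x) (hx : x ∈ s) (hy : y ∈ s) :
    f x + f' (y - x) + φ ‖x - y‖ ≤ f y := by
  let line : ℝ → E := AffineMap.lineMap x y
  let excess : ℝ → ℝ := fun t ↦ f (line t) - t * (f y - f x - (1 - t) * φ ‖x - y‖)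
  have isMaxOn_excess : IsMaxOn excess (Set.Icc 0 1) 0 := isMaxOn_iff.2 fun t ht ↦ by
    have convexity : f (line t) ≤ (1 - t) * f x + t * f y - (1 - t) * t * φ ‖x - y‖ := by
      simpa only [line, AffineMap.lineMap_apply_module, smul_eq_mul] using
        hf.2 hx hy (sub_nonneg.2 ht.2) ht.1 (sub_add_cancel 1 t)
    have excess_zero : excess 0 = f x := by simp [excess, line]
    rw [excess_zero]
    linarith
  have hasDerivWithinAt_excess :
      HasDerivWithinAt excess (f' (y - x) - (f y - f x - φ ‖x - y‖)) (Set.Icc 0 1) 0 := by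
    have hline : HasDerivWithinAt (f ∘ line) (f' (y - x)) (Set.Icc 0 1) 0 :=
      hf'.comp_hasDerivWithinAt_of_eq 0 AffineMap.hasDerivWithinAt_lineMap
        (hf.1.mapsTo_lineMap hx hy) (AffineMap.lineMap_apply_zero x y).symm
    have hid := hasDerivWithinAt_id (0 : ℝ) (Set.Icc 0 1)
    have hchord : HasDerivWithinAt (fun t : ℝ ↦ t * (f y - f x - (1 - t) * φ ‖x - y‖))
        (f y - f x - φ ‖x - y‖) (Set.Icc 0 1) 0 :=
      (hid.mul (((hid.const_sub 1).mul_const _).const_sub _)).congr_deriv (by simp)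
    exact hline.sub hchord
  have deriv_nonpos : f' (y - x) - (f y - f x - φ ‖x - y‖) ≤ 0 := by
    simpa using isMaxOn_excess.localize.hasFDerivWithinAt_nonpos
      hasDerivWithinAt_excess.hasFDerivWithinAt
      (mem_posTangentConeAt_of_segment_subset (y := 1) (by simp [segment_eq_Icc]))
  linarith

theorem stmt_6_general {μ : ℝ} (hμ : 0 ≤ μ) (hf : StrongConvexOn s μ f)
    (hf' : HasFDerivWithinAt f f' s x) (hx : x ∈ s) (hy : y ∈ s) :
    2 * μ * (f x - f y) ≤ ‖f'‖ ^ 2 := by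
  have tangent_le : f x + f' (y - x) + μ / 2 * ‖x - y‖ ^ 2 ≤ f y :=
    tangent_add_modulus_le_of_uniformConvexOn hf hf' hx hy
  have slope_le : f' (x - y) ≤ ‖f'‖ * ‖x - y‖ := (le_abs_self _).trans (f'.le_opNorm _)
  have decrease_le : f x - f y ≤ ‖f'‖ * ‖x - y‖ - μ / 2 * ‖x - y‖ ^ 2 := by
    rw [map_sub] at tangent_le slope_le
    linarith
  calc 2 * μ * (f x - f y)
      ≤ 2 * μ * (‖f'‖ * ‖x - y‖ - μ / 2 * ‖x - y‖ ^ 2) := by gcongr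
    _ = ‖f'‖ ^ 2 - (‖f'‖ - μ * ‖x - y‖) ^ 2 := by ring
    _ ≤ ‖f'‖ ^ 2 := sub_le_self _ (sq_nonneg _)

end NormedSpace

/-- Polyak–Łojasiewicz inequality for differentiable `μ`-strongly convex functions:
`2μ(f(x) − f*) ≤ ‖∇f(x)‖²` for all `x`. -/
theorem stmt_6 {d : ℕ} (μ : ℝ) (hμ : 0 < μ)
    (f : EuclideanSpace ℝ (Fin d) → ℝ) (hdiff : Differentiable ℝ f)
    (hconv : ConvexOn ℝ Set.univ (fun x => f x - (μ / 2) * ‖x‖ ^ 2))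
    (xstar : EuclideanSpace ℝ (Fin d)) (hmin : ∀ x, f xstar ≤ f x) :
    ∀ x, 2 * μ * (f x - f xstar) ≤ ‖gradient f x‖ ^ 2 := by
  intro x
  rw [norm_gradient_eq_norm_fderiv]
  exact stmt_6_general hμ.le (strongConvexOn_iff_convex.2 hconv)
    (hdiff x).hasFDerivAt.hasFDerivWithinAt (Set.mem_univ x) (Set.mem_univ xstar)
end

section
/- Let E = EuclideanSpace ℝ (Fin d), let L > 0, α > 0, and 0 ≤ e, and let f : E → ℝ be differentiable with L-Lipschitz gradient (‖∇f(x) − ∇f(y)‖ ≤ L‖x − y‖ for all x, y). Fix θ ∈ E and let ĝ = ∇f(θ) + ν where ν ∈ E satisfies |νᵢ| ≤ e·|(∇f(θ))ᵢ| for every coordinate i. Then f(θ − α·ĝ) − f(θ) ≤ −α·((1 − e) − (αL/2)·(1 + e)²)·‖∇f(θ)‖². -/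
/-!
Comparing derivatives along a segment, a function whose gradient is `L`-Lipschitz lies below the
quadratic model `y ↦ f θ + ⟪∇f θ, y - θ⟫ + L/2 ‖y - θ‖²`. The relative error bound gives
`‖ν‖ ≤ e ‖∇f θ‖`, so the corrupted gradient `∇f θ + ν` has inner product at least `(1 - e) ‖∇f θ‖²`
with `∇f θ` and norm at most `(1 + e) ‖∇f θ‖`. Inserting both bounds into the model at
`y = θ - α (∇f θ + ν)` gives the estimate.
-/

open Set

lemma piLp_norm_le_norm_of_forall_norm_le {ι : Type*} [Fintype ι] {p : ENNReal} [Fact (1 ≤ p)]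
    {β γ : ι → Type*} [∀ i, SeminormedAddCommGroup (β i)] [∀ i, SeminormedAddCommGroup (γ i)]
    {x : PiLp p β} {y : PiLp p γ} (h : ∀ i, ‖x i‖ ≤ ‖y i‖) : ‖x‖ ≤ ‖y‖ := by
  rcases p.dichotomy with rfl | hp
  · rw [PiLp.norm_eq_ciSup, PiLp.norm_eq_ciSup]
    exact ciSup_mono (finite_range _).bddAbove h
  · have hp_pos : 0 < p.toReal := zero_lt_one.trans_le hp
    rw [PiLp.norm_eq_sum hp_pos, PiLp.norm_eq_sum hp_pos]
    gcongr with i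
    exact h i

lemma piLp_norm_le_mul_norm_of_forall_norm_le {ι : Type*} [Fintype ι] {p : ENNReal} [Fact (1 ≤ p)]
    {β γ : ι → Type*} [∀ i, SeminormedAddCommGroup (β i)] [∀ i, SeminormedAddCommGroup (γ i)]
    [∀ i, NormedSpace ℝ (γ i)] {c : ℝ} (hc : 0 ≤ c) {x : PiLp p β} {y : PiLp p γ}
    (h : ∀ i, ‖x i‖ ≤ c * ‖y i‖) : ‖x‖ ≤ c * ‖y‖ :=
  calc ‖x‖ ≤ ‖c • y‖ := piLp_norm_le_norm_of_forall_norm_le fun i ↦ by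
        rw [PiLp.smul_apply, norm_smul_of_nonneg hc]
        exact h i
    _ = c * ‖y‖ := norm_smul_of_nonneg hc y

lemma norm_sub_sub_fderiv_le_of_norm_fderiv_sub_le {E F : Type*} [NormedAddCommGroup E]
    [NormedSpace ℝ E] [NormedAddCommGroup F] [NormedSpace ℝ F] {f : E → F} {f' : E → E →L[ℝ] F}
    {x y : E} {L : ℝ}
    (hf : ∀ z ∈ segment ℝ x y, HasFDerivAt f (f' z) z)
    (hL : ∀ z ∈ segment ℝ x y, ‖f' z - f' x‖ ≤ L * ‖z - x‖) :
    ‖f y - f x - f' x (y - x)‖ ≤ L / 2 * ‖y - x‖ ^ 2 := by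
  let γ : ℝ → E := AffineMap.lineMap x y
  let r : ℝ → F := fun t ↦ f (γ t) - f x - t • f' x (y - x)
  have hγ_mem {t : ℝ} (ht : t ∈ Icc 0 1) : γ t ∈ segment ℝ x y :=
    lineMap_mem_segment ℝ x y ht
  have hγ_sub (t : ℝ) : γ t - x = t • (y - x) := AffineMap.lineMap_vsub_left x y t
  have hr {t : ℝ} (ht : t ∈ Icc 0 1) : HasDerivAt r ((f' (γ t) - f' x) (y - x)) t := by
    have hfγ := (hf (γ t) (hγ_mem ht)).comp_hasDerivAt t AffineMap.hasDerivAt_lineMap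
    simpa [r] using! (hfγ.sub_const (f x)).sub ((hasDerivAt_id t).smul_const (f' x (y - x)))
  have hmodel (t : ℝ) :
      HasDerivAt (fun t ↦ L / 2 * ‖y - x‖ ^ 2 * t ^ 2) (L * ‖y - x‖ ^ 2 * t) t :=
    ((hasDerivAt_pow 2 t).const_mul _).congr_deriv (by push_cast; ring)
  have hr_deriv_le {t : ℝ} (ht : t ∈ Icc 0 1) :
      ‖(f' (γ t) - f' x) (y - x)‖ ≤ L * ‖y - x‖ ^ 2 * t :=
    calc ‖(f' (γ t) - f' x) (y - x)‖ ≤ L * ‖γ t - x‖ * ‖y - x‖ :=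
          ContinuousLinearMap.le_of_opNorm_le _ (hL (γ t) (hγ_mem ht)) _
      _ = L * ‖y - x‖ ^ 2 * t := by
          rw [hγ_sub, norm_smul, Real.norm_of_nonneg ht.1]
          ring
  have hr_le := image_norm_le_of_norm_deriv_right_le_deriv_boundary
    (fun t ht ↦ (hr ht).continuousAt.continuousWithinAt)
    (fun t ht ↦ (hr (Ico_subset_Icc_self ht)).hasDerivWithinAt) (by simp [r, γ]) hmodel
    (fun t ht ↦ hr_deriv_le (Ico_subset_Icc_self ht)) (right_mem_Icc.2 zero_le_one)
  simpa [r, γ] using hr_le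

section InnerProductSpace

variable {E : Type*} [NormedAddCommGroup E] [InnerProductSpace ℝ E]

lemma one_sub_mul_norm_sq_le_inner_add {e : ℝ} {g ν : E} (hν : ‖ν‖ ≤ e * ‖g‖) :
    (1 - e) * ‖g‖ ^ 2 ≤ inner ℝ g (g + ν) := by
  have hinner : -(‖g‖ * (e * ‖g‖)) ≤ inner ℝ g ν :=
    calc -(‖g‖ * (e * ‖g‖)) ≤ -(‖g‖ * ‖ν‖) := by gcongr
      _ ≤ inner ℝ g ν := neg_le_of_abs_le (abs_real_inner_le_norm g ν)
  rw [inner_add_right, real_inner_self_eq_norm_sq]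
  linarith

variable [CompleteSpace E]

lemma le_add_inner_gradient_add_norm_sq_of_norm_gradient_sub_le {f : E → ℝ} {x y : E} {L : ℝ}
    (hf : ∀ z ∈ segment ℝ x y, DifferentiableAt ℝ f z)
    (hL : ∀ z ∈ segment ℝ x y, ‖gradient f z - gradient f x‖ ≤ L * ‖z - x‖) :
    f y ≤ f x + inner ℝ (gradient f x) (y - x) + L / 2 * ‖y - x‖ ^ 2 := by
  have hfderiv (z : E) : ‖fderiv ℝ f z - fderiv ℝ f x‖ = ‖gradient f z - gradient f x‖ := by
    rw [← toDual_gradient, ← toDual_gradient, ← map_sub, LinearIsometryEquiv.norm_map]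
  have hremainder := norm_sub_sub_fderiv_le_of_norm_fderiv_sub_le (fun z hz ↦ (hf z hz).hasFDerivAt)
    (fun z hz ↦ (hfderiv z).trans_le (hL z hz))
  rw [← inner_gradient_left] at hremainder
  linarith [Real.le_norm_self (f y - f x - inner ℝ (gradient f x) (y - x))]

theorem stmt_10_general {L α e : ℝ} (hL : 0 ≤ L) (hα : 0 ≤ α) {f : E → ℝ} {θ ν : E}
    (hdiff : ∀ x ∈ segment ℝ θ (θ - α • (gradient f θ + ν)), DifferentiableAt ℝ f x)
    (hLip : ∀ x ∈ segment ℝ θ (θ - α • (gradient f θ + ν)),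
      ‖gradient f x - gradient f θ‖ ≤ L * ‖x - θ‖)
    (hν : ‖ν‖ ≤ e * ‖gradient f θ‖) :
    f (θ - α • (gradient f θ + ν)) - f θ ≤
      -α * ((1 - e) - (α * L / 2) * (1 + e) ^ 2) * ‖gradient f θ‖ ^ 2 := by
  have hmodel := le_add_inner_gradient_add_norm_sq_of_norm_gradient_sub_le hdiff hLip
  rw [sub_sub_cancel_left, inner_neg_right, real_inner_smul_right, norm_neg, norm_smul,
    Real.norm_of_nonneg hα] at hmodel
  set g := gradient f θ
  have hnorm : ‖g + ν‖ ≤ (1 + e) * ‖g‖ := by linarith [norm_add_le g ν]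
  calc f (θ - α • (g + ν)) - f θ
      ≤ -(α * inner ℝ g (g + ν)) + L / 2 * (α * ‖g + ν‖) ^ 2 := by linarith
    _ ≤ -(α * ((1 - e) * ‖g‖ ^ 2)) + L / 2 * (α * ((1 + e) * ‖g‖)) ^ 2 := by
        gcongr
        exact one_sub_mul_norm_sq_le_inner_add hν
    _ = -α * ((1 - e) - (α * L / 2) * (1 + e) ^ 2) * ‖g‖ ^ 2 := by ring

end InnerProductSpace

/-- One-step descent estimate along a corrupted gradient
`ghat = ∇f(θ) + ν` with coordinatewise relative error at most `e`:
`f(θ − αghat) − f(θ) ≤ −α((1 − e) − (αL/2)(1 + e)²)‖∇f(θ)‖²`. -/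
theorem stmt_10 {d : ℕ} (L α e : ℝ) (hL : 0 < L) (hα : 0 < α) (he : 0 ≤ e)
    (f : EuclideanSpace ℝ (Fin d) → ℝ) (hdiff : Differentiable ℝ f)
    (hLip : ∀ x y, ‖gradient f x - gradient f y‖ ≤ L * ‖x - y‖)
    (θ : EuclideanSpace ℝ (Fin d))
    (ν : EuclideanSpace ℝ (Fin d)) (hν : ∀ i, |ν i| ≤ e * |gradient f θ i|)
    (ghat : EuclideanSpace ℝ (Fin d)) (hghat : ghat = gradient f θ + ν) :
    f (θ - α • ghat) - f θ ≤
      -α * ((1 - e) - (α * L / 2) * (1 + e) ^ 2) * ‖gradient f θ‖ ^ 2 := by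
  subst hghat
  exact stmt_10_general hL.le hα.le (fun x _ ↦ hdiff x) (fun x _ ↦ hLip x θ)
    (piLp_norm_le_mul_norm_of_forall_norm_le he hν)
end
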